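/- arXiv:math/0304410 — 4 statements merged into one kernel-verified Lean document; each statement's English description precedes it below -/
import Mathlib

section
/- There exists a 27×27 matrix with all entries equal to 1 or -1 whose determinant equals 2^26 · 6^11 · 518. Consequently md(27) ≥ 2^26 · 6^11 · 518. -/
/-- `md n` is the maximal determinant of an `n × n` matrix all of whose
entries are `1` or `-1`. -/
noncomputable def md (n : ℕ) : ℤ :=
  sSup {d : ℤ | ∃ M : Matrix (Fin n) (Fin n) ℤ,
    (∀ i j, M i j = 1 ∨ M i j = -1) ∧ M.det = d}

/-- Row `i` of the matrix, encoded as the bits of a natural number. -/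
def rowBits : List ℕ := [
  53958250, 53394588, 54127409, 21719762, 22206372, 21347657, 43216265, 42392402, 94601720, 2692499, 3287398, 94404607, 107439956, 107666657, 38006847, 118531283, 117787046, 39612920, 66132181, 65414051, 96465351, 108116874, 42579684, 2409165, 65586510, 118100813, 39817215]

/-- The `27 × 27` sign matrix of determinant `2^26 * 6^11 * 518`. -/
def signFn : Fin 27 → Fin 27 → ℤ :=
  fun i j => if (rowBits.getD i.val 0).testBit j.val then 1 else -1

/-- Integral elimination multipliers (lower triangular). -/
def lowRows : List (List ℤ) := [
  [1],
  [-1, 1],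
  [1, 0, 1],
  [-1, 0, 0, 1],
  [1, -1, 0, -1, 1],
  [-1, 0, -1, 1, 0, 1],
  [0, 0, 0, 0, 0, -1, 1],
  [0, 0, 0, -1, 0, 0, 0, 1],
  [-1, -1, -1, -2, 0, -1, 1, 2, 1],
  [1, 1, 0, 0, 1, 2, -2, -1, 0, 2],
  [-2, -1, 1, 1, -3, -4, 5, 1, 0, -4, 2],
  [5, 13, 15, 15, -3, 3, 12, -6, -7, -4, 16, 7],
  [3, -2, 2, 2, -6, -8, 10, -5, 0, -1, 4, 0, 7],
  [-1, -3, -8, -19, -9, -23, 15, 20, 0, -7, -5, 0, 5, 11],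
  [2, -7, -10, -1, 5, -19, 35, 25, 0, -12, -3, 0, 16, 17, 26],
  [-3, 4, 2, -18, 12, -4, 6, 21, 0, -21, -2, 0, -11, -6, 0, 26],
  [4, -1, 6, 11, -3, 27, -21, -15, 0, 2, -19, 0, 6, -5, 0, 0, 26],
  [5, 2, 14, -22, -20, 24, -36, -9, -26, -17, -40, 0, 1, -16, -26, 26, 52, 26],
  [14, 3, 8, -7, 9, -3, 11, 6, 0, -6, 5, 0, -5, -11, 0, 13, 0, 0, 13],
  [27, 9, 14, -16, 12, -4, 18, 13, 0, -13, 5, 0, -5, -18, 0, 24, 5, 0, 24, 5],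
  [65, 34, 57, -44, -4, -48, 31, 8, 0, -8, 23, 0, -23, -31, -37, 29, -14, 0, 29, -14, 37],
  [0, 0, 0, -1, -1, -1, 0, 0, 0, 0, 0, 0, 1, 1, 0, 0, 0, 0, 0, 0, 0, 1],
  [0, 0, 0, -1, -1, -1, 1, 1, 0, 0, 0, 0, 0, 0, 0, 0, 0, 0, 0, 0, 0, 0, 1],
  [1, 1, 1, 2, 2, 2, -1, -1, 0, 1, 1, 0, -1, -1, 0, 0, 0, 0, 0, 0, 0, -1, -1, 1],
  [1, 1, 1, 1, 1, 1, 0, 0, 0, 0, 0, 0, -1, -1, 0, 0, 0, 0, 1, 1, 0, -1, 0, 0, 1],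
  [0, 0, 0, -1, -1, -1, 0, 0, 0, -1, -1, 0, 1, 1, 0, 1, 1, 0, 0, 0, 0, 1, 0, -1, 0, 1],
  [3, 3, 3, 3, 3, 3, 3, 3, -2, 4, 4, -2, -4, -4, 2, -3, -3, 2, 4, 4, -2, -4, 3, 4, 4, -3, 2]]

/-- The result of the elimination (row `i` starts at its diagonal entry). -/
def upRows : List (List ℤ) := [
  [-1, 1, -1, 1, -1, 1, 1, -1, -1, 1, 1, -1, 1, -1, 1, -1, 1, 1, 1, -1, 1, 1, -1, -1, 1, 1, -1],
  [-2, 2, 0, 2, -2, -2, 2, 0, -2, 0, 2, 0, 2, -2, 2, -2, 0, 0, 2, -2, 0, 0, 0, 0, 0, 0],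
  [-2, 0, 0, 2, 0, -2, 0, 2, 0, 0, 0, 0, 2, 0, 2, 0, 0, 0, 2, 2, -2, -2, 2, 2, -2],
  [-2, 2, -2, 0, 2, 0, 0, -2, 2, -2, 2, 0, 0, 0, 0, -2, 2, -2, -2, 2, 0, 0, -2, 0],
  [-4, 4, 0, -2, 2, 2, 2, -4, 2, -4, 2, 0, 0, 0, 0, -4, 4, 0, 0, 0, 0, 0, 0],
  [-4, 2, 2, 0, -2, 0, 2, 0, 2, -2, 0, 0, 0, 0, 0, -4, -4, 4, 0, 0, -4, 0],
  [-2, 2, 0, 0, 0, 0, -2, 0, 2, -2, 0, 2, -2, 0, 2, 0, -2, 2, -2, 2, 0],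
  [-2, 2, 0, 0, 0, 2, -2, 0, 2, -2, 0, 2, -2, 0, 0, -2, 2, -2, 2, 0],
  [6, -2, -2, -2, 0, -6, 0, 2, -4, 2, 0, -6, 0, -2, -4, 10, -8, 2, 4],
  [-2, 6, -4, 8, -2, -6, 2, 2, -4, 2, 2, -4, 4, 2, -10, 6, -6, -4],
  [-14, 14, -22, 12, 10, -8, -2, 10, -8, -2, 10, -4, -8, 16, -12, 12, 4],
  [84, -36, 96, 24, -36, 12, 24, -36, 12, 24, 24, -36, -54, 30, 12, -66],
  [-44, 24, 20, -44, 24, 20, -16, -4, 20, 20, -16, 4, -24, 24, 8],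
  [-52, 52, 0, -52, 52, 20, -28, 8, 8, -46, 94, -102, 102, 56],
  [156, 0, 0, 156, -40, -100, -16, -68, 14, 46, -134, 134, -8],
  [104, -104, 0, 8, -84, 76, -80, -60, 48, 32, 72, 12],
  [104, -104, 76, 8, -84, -32, 54, -90, 122, -18, 36],
  [-312, 264, 36, 12, -92, -4, -80, 172, 140, 136],
  [-20, -76, 96, -8, -58, 10, 50, 54, -56],
  [-148, 148, -4, -104, 20, 100, 132, -88],
  [444, 248, -434, 92, 164, 178, -94],
  [6, 0, 0, -6, 6, 6],
  [-6, 6, -6, 6, 0],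
  [-12, 12, -12, -12],
  [12, 0, -12],
  [12, 12],
  [-84]]

def lowFn : Fin 27 → Fin 27 → ℤ :=
  fun i j => (lowRows.getD i.val []).getD j.val 0

def upFn : Fin 27 → Fin 27 → ℤ :=
  fun i j => if j.val < i.val then 0 else (upRows.getD i.val []).getD (j.val - i.val) 0

def lowMat : Matrix (Fin 27) (Fin 27) ℤ := lowFn

def upMat : Matrix (Fin 27) (Fin 27) ℤ := upFn

def signMat : Matrix (Fin 27) (Fin 27) ℤ := signFn

theorem low_mul_sign : lowMat * signMat = upMat := by
  have h : ∀ i j, ∑ k, lowFn i k * signFn k j = upFn i j := by decide +kernel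
  ext i j
  rw [Matrix.mul_apply]
  exact h i j

theorem low_upper_zero : ∀ i j : Fin 27, i < j → lowFn i j = 0 := by decide +kernel

theorem up_lower_zero : ∀ i j : Fin 27, j < i → upFn i j = 0 := by decide +kernel

theorem det_low : lowMat.det = ∏ i, lowFn i i :=
  Matrix.det_of_isLowerTriangular lowMat (fun i j h => low_upper_zero i j h)

theorem det_up : upMat.det = ∏ i, upFn i i :=
  Matrix.det_of_isUpperTriangular (fun i j h => up_lower_zero i j h)

theorem prod_eq : ∏ i, upFn i i = (∏ i, lowFn i i) * (2^26 * 6^11 * 518) := by decide +kernel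

theorem prod_ne : ∏ i, lowFn i i ≠ 0 := by decide +kernel

theorem det_sign : signMat.det = 2^26 * 6^11 * 518 := by
  have h : lowMat.det * signMat.det = upMat.det := by rw [← Matrix.det_mul, low_mul_sign]
  rw [det_low, det_up, prod_eq] at h
  exact mul_left_cancel₀ prod_ne h

theorem sign_entries : ∀ i j, signMat i j = 1 ∨ signMat i j = -1 := by
  intro i j
  unfold signMat signFn
  split_ifs
  · exact Or.inl rfl
  · exact Or.inr rfl

theorem stmt_2 :
    (∃ M : Matrix (Fin 27) (Fin 27) ℤ,
      (∀ i j, M i j = 1 ∨ M i j = -1) ∧ M.det = 2^26 * 6^11 * 518) ∧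
    (2^26 * 6^11 * 518 : ℤ) ≤ md 27 := by
  refine ⟨⟨signMat, sign_entries, det_sign⟩, ?_⟩
  refine le_csSup ?_ ⟨signMat, sign_entries, det_sign⟩
  refine ⟨Nat.factorial 27 • (1 : ℤ) ^ 27, ?_⟩
  rintro d ⟨M, hM, rfl⟩
  have h := Matrix.det_le (A := M) (abv := AbsoluteValue.abs) (x := (1 : ℤ)) (fun i j => by
    rcases hM i j with h | h <;> simp [h])
  rw [Fintype.card_fin] at h
  exact (le_abs_self _).trans h
end

section
/- There exists a 33×33 matrix with all entries equal to 1 or -1 whose determinant equals 2^32 · 8^14 · 441. Consequently md(33) ≥ 2^32 · 8^14 · 441. -/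
set_option maxHeartbeats 4000000
set_option maxRecDepth 20000

/-- Rows of the sign matrix. -/
def rowsM : List (List ℤ) := [
   [-1, 1, 1, -1, 1, -1, -1, -1, -1, -1, -1, 1, 1, 1, 1, -1, 1, 1, 1, -1, 1, 1, -1, 1, 1, 1, -1, -1, 1, -1, -1, 1, -1],
   [-1, -1, -1, -1, 1, 1, -1, -1, -1, -1, -1, -1, -1, -1, -1, 1, 1, -1, 1, 1, 1, 1, 1, 1, -1, 1, 1, -1, 1, -1, 1, -1, 1],
   [-1, -1, 1, 1, 1, -1, 1, -1, 1, -1, -1, -1, 1, -1, 1, -1, -1, 1, 1, 1, -1, 1, 1, 1, -1, 1, -1, 1, -1, 1, 1, 1, 1],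
   [-1, -1, -1, 1, -1, 1, 1, -1, -1, -1, -1, -1, 1, -1, 1, -1, 1, 1, -1, -1, 1, 1, -1, -1, -1, -1, 1, 1, -1, -1, -1, -1, -1],
   [1, -1, -1, 1, 1, -1, -1, 1, 1, -1, -1, -1, 1, 1, 1, 1, 1, 1, -1, 1, 1, -1, -1, 1, -1, -1, 1, -1, 1, 1, 1, 1, -1],
   [1, 1, 1, 1, 1, 1, -1, -1, 1, -1, 1, -1, 1, 1, -1, -1, 1, -1, -1, 1, -1, 1, 1, -1, -1, 1, 1, 1, 1, -1, -1, 1, -1],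
   [-1, -1, 1, 1, -1, 1, -1, -1, -1, 1, -1, -1, 1, 1, -1, 1, 1, 1, 1, -1, -1, 1, -1, 1, 1, -1, 1, 1, -1, -1, 1, 1, -1],
   [-1, -1, 1, 1, -1, 1, 1, 1, -1, -1, -1, 1, 1, 1, -1, 1, -1, -1, -1, -1, 1, -1, 1, 1, -1, 1, -1, 1, 1, -1, 1, 1, -1],
   [-1, 1, 1, -1, -1, -1, 1, -1, 1, -1, 1, 1, -1, 1, -1, 1, 1, 1, -1, 1, 1, 1, -1, 1, -1, -1, 1, 1, -1, -1, 1, 1, 1],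
   [-1, -1, -1, -1, 1, 1, -1, -1, 1, 1, 1, 1, 1, -1, -1, -1, -1, 1, -1, -1, 1, -1, -1, -1, 1, 1, 1, 1, 1, 1, 1, 1, 1],
   [1, -1, -1, -1, -1, -1, 1, -1, -1, 1, 1, 1, 1, -1, -1, -1, 1, 1, 1, 1, -1, -1, 1, -1, -1, -1, -1, -1, 1, -1, 1, 1, -1],
   [-1, -1, 1, -1, -1, 1, 1, 1, 1, 1, -1, 1, -1, -1, 1, 1, 1, 1, -1, 1, -1, 1, 1, -1, 1, 1, 1, -1, 1, 1, -1, 1, -1],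
   [1, 1, 1, -1, 1, -1, 1, -1, -1, 1, -1, -1, 1, -1, -1, 1, -1, 1, -1, -1, 1, 1, 1, 1, -1, -1, 1, 1, 1, 1, -1, -1, -1],
   [1, -1, -1, 1, 1, -1, 1, 1, -1, -1, 1, -1, -1, -1, -1, 1, 1, 1, -1, -1, -1, 1, -1, 1, 1, 1, -1, 1, 1, -1, -1, 1, 1],
   [-1, -1, 1, 1, 1, -1, 1, -1, -1, -1, -1, 1, 1, 1, -1, 1, 1, -1, 1, 1, -1, -1, -1, -1, 1, -1, 1, 1, 1, 1, -1, -1, 1],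
   [1, 1, 1, 1, -1, 1, -1, -1, 1, -1, -1, 1, -1, -1, -1, -1, 1, 1, -1, -1, -1, -1, 1, 1, 1, -1, -1, -1, 1, 1, 1, -1, 1],
   [1, -1, 1, -1, -1, 1, 1, -1, 1, -1, 1, -1, 1, 1, 1, 1, -1, 1, 1, -1, -1, -1, -1, 1, -1, 1, 1, -1, 1, -1, -1, -1, 1],
   [1, 1, -1, -1, 1, 1, 1, 1, -1, 1, -1, 1, 1, 1, 1, -1, 1, 1, -1, 1, -1, -1, 1, 1, 1, 1, 1, 1, -1, -1, 1, -1, 1],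
   [-1, -1, 1, -1, -1, -1, -1, 1, 1, 1, 1, -1, 1, -1, 1, -1, 1, -1, -1, 1, 1, -1, 1, 1, 1, -1, -1, 1, 1, -1, -1, -1, 1],
   [-1, -1, -1, -1, 1, 1, -1, 1, 1, -1, 1, 1, 1, 1, -1, 1, 1, 1, 1, -1, -1, 1, 1, 1, -1, -1, -1, 1, -1, 1, -1, -1, -1],
   [-1, 1, -1, 1, -1, 1, 1, 1, -1, -1, 1, -1, 1, 1, -1, -1, -1, 1, 1, 1, 1, 1, 1, 1, 1, -1, 1, -1, 1, 1, -1, 1, 1],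
   [-1, 1, -1, -1, -1, -1, 1, 1, 1, 1, -1, -1, 1, 1, -1, -1, 1, -1, -1, -1, -1, 1, -1, -1, -1, 1, -1, -1, 1, 1, 1, -1, 1],
   [1, 1, -1, -1, -1, -1, -1, 1, 1, -1, -1, 1, 1, -1, 1, 1, -1, -1, 1, -1, -1, 1, 1, -1, 1, -1, 1, 1, 1, -1, 1, 1, 1],
   [-1, 1, -1, -1, -1, -1, -1, -1, -1, -1, 1, -1, -1, 1, 1, 1, -1, 1, -1, 1, -1, -1, 1, -1, 1, 1, -1, 1, 1, 1, 1, -1, -1],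
   [1, -1, 1, -1, -1, -1, -1, 1, -1, -1, -1, -1, -1, 1, -1, -1, 1, 1, 1, -1, 1, -1, 1, -1, -1, 1, 1, 1, -1, 1, -1, 1, 1],
   [-1, 1, 1, -1, 1, 1, 1, 1, -1, -1, 1, -1, -1, -1, 1, -1, 1, -1, 1, -1, -1, -1, -1, 1, -1, -1, 1, 1, 1, 1, 1, 1, -1],
   [-1, -1, -1, -1, 1, -1, 1, -1, 1, -1, -1, -1, -1, 1, -1, -1, -1, -1, -1, -1, -1, -1, 1, 1, 1, -1, 1, -1, -1, -1, -1, 1, -1],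
   [1, -1, 1, -1, 1, 1, 1, -1, -1, -1, 1, -1, 1, 1, 1, 1, 1, -1, -1, -1, 1, 1, 1, -1, 1, -1, -1, -1, -1, 1, 1, 1, 1],
   [1, -1, 1, -1, 1, 1, 1, 1, 1, -1, -1, -1, -1, 1, -1, -1, -1, 1, 1, 1, 1, 1, -1, -1, 1, -1, -1, 1, 1, -1, 1, -1, -1],
   [1, -1, -1, -1, -1, 1, -1, -1, -1, 1, -1, 1, -1, 1, 1, -1, -1, -1, -1, 1, -1, 1, -1, 1, -1, -1, -1, 1, 1, 1, -1, 1, 1],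
   [1, -1, 1, -1, -1, -1, -1, 1, -1, -1, 1, 1, 1, -1, -1, -1, -1, -1, -1, 1, -1, 1, -1, 1, 1, 1, 1, -1, -1, 1, 1, -1, -1],
   [-1, -1, 1, 1, 1, -1, -1, 1, -1, 1, 1, 1, -1, 1, 1, -1, -1, 1, -1, -1, -1, 1, 1, -1, -1, -1, 1, -1, 1, -1, 1, -1, 1],
   [1, -1, -1, 1, -1, -1, 1, -1, 1, 1, 1, 1, -1, 1, 1, -1, 1, -1, 1, -1, 1, 1, 1, 1, 1, 1, 1, 1, 1, 1, 1, -1, -1]]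

/-- Rows of an upper triangular matrix `A` such that `M * A` is lower triangular. -/
def rowsA : List (List ℤ) := [
   [1, 1, 0, -1, 0, 0, 0, -2, -6, -5, 1, 25, -15, 36, 26, 22, -16, 136, -238, 296, 382, 466, 438, 582, 32, 18, -22, 209, 1, 8, 16, 23, -209],
   [0, 1, -1, 1, 1, 1, 1, 1, 3, 3, -6, 4, 2, -1, -27, 45, 10, -170, 725, -739, -406, -526, -554, -76, -59, -31, 29, -208, -1, -11, -13, 232, 232],
   [0, 0, 1, -1, -1, 0, -1, 0, -2, -2, 1, 3, 7, -32, -28, 14, -12, -164, -226, 326, 325, 364, 464, 172, -45, -38, -18, 168, 0, -8, -178, -41, 191],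
   [0, 0, 0, 1, 1, 1, 0, 1, 1, 2, 2, -16, -30, 53, 23, 76, -3, -151, 193, -17, 111, 93, 403, 233, 17, 24, 44, -394, -1, 3, 204, -232, -232],
   [0, 0, 0, 0, 1, 1, 1, 1, -1, 1, 1, -8, -4, 40, 68, -48, 4, 244, -28, 38, 400, 466, 686, 106, 0, 0, 0, -6, 0, -6, 15, -62, 170],
   [0, 0, 0, 0, 0, 1, 0, 1, 1, 1, -5, 18, -2, 20, 34, -24, -8, 184, 248, -163, 231, 240, 340, 410, -29, -22, -22, 236, 1, -1, -29, 209, 209],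
   [0, 0, 0, 0, 0, 0, 1, 0, -2, -1, -1, 8, 4, 36, 70, -84, 12, 396, 48, -258, 805, 970, 1090, 464, 45, 38, 18, -150, 0, 2, 193, -21, -253],
   [0, 0, 0, 0, 0, 0, 0, 2, 2, 2, -1, -14, 26, -70, -64, -24, 22, -2, 374, -550, 258, 294, 122, 244, -70, -56, -16, 158, 0, -10, -191, 0, 232],
   [0, 0, 0, 0, 0, 0, 0, 0, 4, 2, -7, 23, -5, 12, -6, 10, 10, 42, 240, -588, 645, 798, 774, 492, 50, 43, 23, -184, 0, 0, 207, 23, -209],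
   [0, 0, 0, 0, 0, 0, 0, 0, 0, 1, -2, 5, -3, 30, 40, -34, 12, 148, -202, 170, 464, 560, 752, 304, 24, 24, 24, -216, 0, 8, 232, -144, -144],
   [0, 0, 0, 0, 0, 0, 0, 0, 0, 0, 9, -39, 19, -57, -21, -14, -23, -387, 207, -9, -219, -309, -27, -81, -5, 2, 22, -212, -1, 1, 29, -209, -209],
   [0, 0, 0, 0, 0, 0, 0, 0, 0, 0, 0, 11, -33, 64, 34, 74, -12, -116, 146, 14, -184, -232, -184, 424, 0, 0, 0, -24, 0, 8, 16, -168, -168],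
   [0, 0, 0, 0, 0, 0, 0, 0, 0, 0, 0, 0, 22, -49, -47, 13, -4, -416, 671, -739, -406, -508, -668, 314, -31, -17, 3, 0, -1, -11, -220, 209, 209],
   [0, 0, 0, 0, 0, 0, 0, 0, 0, 0, 0, 0, 0, 38, 80, -117, 11, 635, -584, 511, 367, 487, 553, -415, 83, 55, -5, 10, 1, 13, 233, -250, -250],
   [0, 0, 0, 0, 0, 0, 0, 0, 0, 0, 0, 0, 0, 0, 22, -4, -28, -252, -72, 306, -424, -526, -306, -186, 16, 16, 16, -158, 0, 10, 191, -191, -191],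
   [0, 0, 0, 0, 0, 0, 0, 0, 0, 0, 0, 0, 0, 0, 0, 49, -27, -475, 532, -371, -633, -795, -669, -177, -7, 7, 27, -198, -1, -9, 0, 191, 191],
   [0, 0, 0, 0, 0, 0, 0, 0, 0, 0, 0, 0, 0, 0, 0, 0, 10, -62, 194, -406, 614, 728, 928, 344, 16, 23, 43, -356, -1, 1, 191, 0, -232],
   [0, 0, 0, 0, 0, 0, 0, 0, 0, 0, 0, 0, 0, 0, 0, 0, 0, 192, 120, 30, -57, -102, 26, -410, -24, -17, 3, 0, 0, -8, -16, -23, 209],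
   [0, 0, 0, 0, 0, 0, 0, 0, 0, 0, 0, 0, 0, 0, 0, 0, 0, 0, 456, -588, 645, 744, 868, 530, 0, 7, 27, -198, 0, 2, 220, -18, -250],
   [0, 0, 0, 0, 0, 0, 0, 0, 0, 0, 0, 0, 0, 0, 0, 0, 0, 0, 0, 243, -383, -488, -588, 66, -45, -38, -38, 370, 1, -3, -204, 232, 232],
   [0, 0, 0, 0, 0, 0, 0, 0, 0, 0, 0, 0, 0, 0, 0, 0, 0, 0, 0, 0, 787, 916, 1184, 502, 48, 41, 21, -150, 0, 2, 193, -21, -253],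
   [0, 0, 0, 0, 0, 0, 0, 0, 0, 0, 0, 0, 0, 0, 0, 0, 0, 0, 0, 0, 0, 18, -114, 390, 28, 14, -26, 208, 1, 11, 13, -232, -232],
   [0, 0, 0, 0, 0, 0, 0, 0, 0, 0, 0, 0, 0, 0, 0, 0, 0, 0, 0, 0, 0, 0, 248, -476, 74, 60, 40, -383, -1, 2, 220, -209, -209],
   [0, 0, 0, 0, 0, 0, 0, 0, 0, 0, 0, 0, 0, 0, 0, 0, 0, 0, 0, 0, 0, 0, 0, 366, 1, 1, 1, -38, 0, 10, 29, -18, -250],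
   [0, 0, 0, 0, 0, 0, 0, 0, 0, 0, 0, 0, 0, 0, 0, 0, 0, 0, 0, 0, 0, 0, 0, 0, 53, 39, -1, 14, 0, -2, 14, 44, -188],
   [0, 0, 0, 0, 0, 0, 0, 0, 0, 0, 0, 0, 0, 0, 0, 0, 0, 0, 0, 0, 0, 0, 0, 0, 0, 7, 27, -222, -1, -1, 16, 23, -209],
   [0, 0, 0, 0, 0, 0, 0, 0, 0, 0, 0, 0, 0, 0, 0, 0, 0, 0, 0, 0, 0, 0, 0, 0, 0, 0, 20, -223, -1, 2, 13, -232, -232],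
   [0, 0, 0, 0, 0, 0, 0, 0, 0, 0, 0, 0, 0, 0, 0, 0, 0, 0, 0, 0, 0, 0, 0, 0, 0, 0, 0, 27, 1, 10, 191, 0, -232],
   [0, 0, 0, 0, 0, 0, 0, 0, 0, 0, 0, 0, 0, 0, 0, 0, 0, 0, 0, 0, 0, 0, 0, 0, 0, 0, 0, 0, 1, 11, 220, -209, -209],
   [0, 0, 0, 0, 0, 0, 0, 0, 0, 0, 0, 0, 0, 0, 0, 0, 0, 0, 0, 0, 0, 0, 0, 0, 0, 0, 0, 0, 0, 8, 16, 23, -209],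
   [0, 0, 0, 0, 0, 0, 0, 0, 0, 0, 0, 0, 0, 0, 0, 0, 0, 0, 0, 0, 0, 0, 0, 0, 0, 0, 0, 0, 0, 0, 27, -188, -188],
   [0, 0, 0, 0, 0, 0, 0, 0, 0, 0, 0, 0, 0, 0, 0, 0, 0, 0, 0, 0, 0, 0, 0, 0, 0, 0, 0, 0, 0, 0, 0, 191, 191],
   [0, 0, 0, 0, 0, 0, 0, 0, 0, 0, 0, 0, 0, 0, 0, 0, 0, 0, 0, 0, 0, 0, 0, 0, 0, 0, 0, 0, 0, 0, 0, 0, 232]]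

def entM (i j : Fin 33) : ℤ := (rowsM.getD i.val []).getD j.val 0

def matM : Matrix (Fin 33) (Fin 33) ℤ := fun i j => entM i j

def entA (i j : Fin 33) : ℤ := (rowsA.getD i.val []).getD j.val 0

def matA : Matrix (Fin 33) (Fin 33) ℤ := fun i j => entA i j

theorem entM_sign : ∀ i j : Fin 33, entM i j = 1 ∨ entM i j = -1 := by decide +kernel

theorem matM_sign : ∀ i j, matM i j = 1 ∨ matM i j = -1 := entM_sign

theorem entA_upper : ∀ i j : Fin 33, j < i → entA i j = 0 := by decide +kernel

theorem matA_upper : ∀ i j : Fin 33, j < i → matA i j = 0 := entA_upper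

def prodEntry (i j : Fin 33) : ℤ := ((List.finRange 33).map fun k => matM i k * matA k j).sum

theorem prodEntry_eq (i j : Fin 33) : (matM * matA) i j = prodEntry i j := by
  rw [Matrix.mul_apply, prodEntry, Fin.sum_univ_def]

theorem prodEntry_lower : ∀ i j : Fin 33, i < j → prodEntry i j = 0 := by decide +kernel

theorem diag_nonzero : ((List.finRange 33).map fun k => matA k k).prod ≠ 0 := by decide +kernel

theorem diag_prod : ((List.finRange 33).map fun k => prodEntry k k).prod =
    (2^32 * 8^14 * 441) * ((List.finRange 33).map fun k => matA k k).prod := by decide +kernel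

theorem matM_det : matM.det = 2^32 * 8^14 * 441 := by
  have hA : matA.det = ((List.finRange 33).map fun k => matA k k).prod := by
    rw [Matrix.det_of_isUpperTriangular (fun i j h => matA_upper i j h), Fin.prod_univ_def]
  have hP : (matM * matA).det = ((List.finRange 33).map fun k => prodEntry k k).prod := by
    rw [Matrix.det_of_isLowerTriangular _
      (fun i j h => (prodEntry_eq i j).trans (prodEntry_lower i j (by simpa using h))),
      Fin.prod_univ_def]
    simp only [prodEntry_eq]
  rw [Matrix.det_mul, hA, diag_prod] at hP
  exact mul_right_cancel₀ diag_nonzero hP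

theorem stmt_5 :
    (∃ M : Matrix (Fin 33) (Fin 33) ℤ,
      (∀ i j, M i j = 1 ∨ M i j = -1) ∧ M.det = 2^32 * 8^14 * 441) ∧
    (2^32 * 8^14 * 441 : ℤ) ≤ md 33 := by
  have h : ∃ M : Matrix (Fin 33) (Fin 33) ℤ,
      (∀ i j, M i j = 1 ∨ M i j = -1) ∧ M.det = 2^32 * 8^14 * 441 :=
    ⟨matM, matM_sign, matM_det⟩
  refine ⟨h, le_csSup ⟨Nat.factorial 33 • (1 : ℤ) ^ 33, ?_⟩ h⟩
  rintro d ⟨M, hM, rfl⟩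
  have hb := Matrix.det_le (A := M) (abv := AbsoluteValue.abs) (x := (1 : ℤ)) (by
    intro i j
    rcases hM i j with e | e <;> simp [e])
  rw [Fintype.card_fin] at hb
  exact (le_abs_self _).trans hb
end

section
/- There exists a 39×39 matrix with all entries equal to 1 or -1 whose determinant equals 2^38 · 9^17 · 1241. Consequently md(39) ≥ 2^38 · 9^17 · 1241. -/
/-- The list of the 39 signs encoded by the binary digits of `m` (digit 1 for `1`, 0 for `-1`). -/
def signs (m : ℕ) : List ℤ :=
  (List.range 39).map fun k => bif m.testBit k then .ofNat 1 else .negSucc 0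

/-- Columns of the record matrix, as lists of signs. -/
def colData : List (List ℤ) :=
  [510391506233, 378068516880, 380515604074, 536513454049, 545529978509, 23388833361,
   340904317397, 135373590491, 405634788430, 242082987137, 435147181480, 200261214257,
   410108879784, 502684561694, 32464155752, 77998524340, 119597991171, 335205910699,
   288214138421, 274136027814, 320831593240, 233507981871, 477440341522, 39748631355,
   458630849357, 367639783669, 495788739955, 529119981819, 464213018471, 177354867964,
   163613956546, 185703979132, 462081584550, 52589229503, 284619027186, 129961065844,
   476176379546, 287232349327, 215083509705].map signs

set_option maxHeartbeats 4000000 in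
/-- Rows (cut off after the diagonal) of a lower triangular integer matrix `P` such that `P * M`
is upper triangular. -/
def elimData : List (List ℤ) :=
  [[.ofNat 1],
   [.ofNat 1, .ofNat 1],
   [.ofNat 0, .negSucc 0, .ofNat 1],
   [.negSucc 0, .negSucc 0, .ofNat 1, .ofNat 1],
   [.ofNat 1, .ofNat 2, .negSucc 0, .negSucc 0, .ofNat 1],
   [.negSucc 0, .negSucc 0, .ofNat 1, .ofNat 0, .ofNat 0, .ofNat 1],
   [.negSucc 1, .negSucc 2, .ofNat 2, .ofNat 1, .ofNat 1, .ofNat 1, .ofNat 2],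
   [.ofNat 0, .ofNat 1, .negSucc 1, .ofNat 1, .ofNat 1, .negSucc 0, .ofNat 0, .ofNat 2],
   [.ofNat 0, .ofNat 0, .ofNat 0, .ofNat 0, .negSucc 0, .negSucc 0, .ofNat 0, .negSucc 0, .ofNat 1],
   [.negSucc 3, .negSucc 2, .ofNat 2, .ofNat 1, .ofNat 0, .negSucc 1, .ofNat 0, .negSucc 2, .ofNat 5, .ofNat 4],
   [.negSucc 5, .negSucc 0, .ofNat 3, .negSucc 1, .ofNat 7, .ofNat 4, .ofNat 0, .ofNat 6, .negSucc 2, .negSucc 0, .ofNat 7],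
   [.ofNat 2, .negSucc 2, .negSucc 0, .ofNat 4, .ofNat 6, .ofNat 7, .ofNat 5, .ofNat 3, .negSucc 8, .negSucc 2, .negSucc 3, .ofNat 5],
   [.negSucc 15, .negSucc 2, .ofNat 8, .negSucc 4, .ofNat 33, .ofNat 16, .ofNat 5, .ofNat 12, .negSucc 17, .negSucc 2, .ofNat 14, .ofNat 14, .ofNat 9],
   [.negSucc 49, .negSucc 51, .negSucc 5, .ofNat 27, .ofNat 76, .ofNat 19, .ofNat 35, .ofNat 22, .negSucc 32, .ofNat 10, .ofNat 5, .ofNat 36, .ofNat 32, .ofNat 31],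
   [.ofNat 86, .ofNat 89, .ofNat 10, .negSucc 45, .negSucc 129, .negSucc 31, .negSucc 58, .negSucc 36, .ofNat 56, .negSucc 17, .negSucc 8, .negSucc 60, .negSucc 54, .negSucc 52, .ofNat 1],
   [.negSucc 36, .ofNat 187, .ofNat 80, .negSucc 142, .ofNat 85, .ofNat 69, .negSucc 71, .ofNat 279, .negSucc 26, .negSucc 93, .ofNat 328, .negSucc 262, .negSucc 64, .ofNat 1, .ofNat 33, .ofNat 125],
   [.negSucc 9, .negSucc 43, .ofNat 56, .ofNat 43, .ofNat 139, .ofNat 96, .ofNat 45, .ofNat 84, .negSucc 2, .negSucc 33, .ofNat 7, .ofNat 118, .ofNat 34, .ofNat 112, .ofNat 198, .ofNat 8, .ofNat 159],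
   [.ofNat 8, .negSucc 73, .negSucc 153, .negSucc 88, .negSucc 1, .negSucc 185, .negSucc 35, .negSucc 230, .ofNat 330, .ofNat 191, .ofNat 49, .ofNat 124, .ofNat 82, .ofNat 238, .ofNat 60, .negSucc 60, .negSucc 17, .ofNat 273],
   [.negSucc 247, .negSucc 145, .negSucc 65, .negSucc 60, .ofNat 22, .negSucc 33, .ofNat 76, .negSucc 98, .negSucc 109, .ofNat 59, .negSucc 138, .ofNat 76, .ofNat 58, .negSucc 217, .negSucc 339, .negSucc 48, .negSucc 281, .negSucc 42,
    .ofNat 160],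
   [.negSucc 2920, .negSucc 496, .negSucc 281, .negSucc 951, .ofNat 1669, .ofNat 452, .ofNat 1372, .ofNat 1737, .negSucc 1594, .negSucc 1371, .ofNat 752, .negSucc 112, .ofNat 301, .negSucc 1675, .negSucc 1419,
    .ofNat 1112, .negSucc 1793, .negSucc 1635, .ofNat 1645, .ofNat 1080],
   [.negSucc 3472, .negSucc 625, .negSucc 515, .negSucc 1065, .ofNat 1972, .ofNat 401, .ofNat 1576, .ofNat 1971, .negSucc 1849, .negSucc 1485, .ofNat 791, .negSucc 43, .ofNat 388, .negSucc 1867, .negSucc 1749,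
    .ofNat 1196, .negSucc 2216, .negSucc 1812, .ofNat 1840, .ofNat 1215, .ofNat 135],
   [.ofNat 1647, .negSucc 3697, .ofNat 14844, .ofNat 7638, .negSucc 2123, .ofNat 4497, .negSucc 4567, .negSucc 588, .negSucc 14137, .ofNat 50, .ofNat 2327, .negSucc 6187, .negSucc 3707, .negSucc 5963,
    .negSucc 4821, .negSucc 339, .ofNat 5975, .negSucc 18708, .negSucc 6351, .ofNat 6335, .negSucc 4984, .ofNat 7168],
   [.negSucc 25092, .negSucc 7289, .ofNat 14524, .negSucc 97, .ofNat 17940, .ofNat 9493, .ofNat 8328, .ofNat 20351, .negSucc 32305, .negSucc 16213, .ofNat 18403, .negSucc 8891, .negSucc 2683,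
    .negSucc 18459, .negSucc 11453, .ofNat 14604, .negSucc 9212, .negSucc 37704, .ofNat 2576, .ofNat 16955, .negSucc 2604, .ofNat 8496, .ofNat 5680],
   [.ofNat 222160, .ofNat 37676, .negSucc 148599, .ofNat 37548, .negSucc 169046, .negSucc 119597, .negSucc 94612, .negSucc 166339, .ofNat 250064, .ofNat 205057, .negSucc 194802,
    .ofNat 31667, .ofNat 40728, .ofNat 212978, .ofNat 64266, .negSucc 170231, .ofNat 85319, .ofNat 334378, .negSucc 41908, .negSucc 137489, .ofNat 55275, .negSucc 82033, .negSucc 58094,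
    .ofNat 69055],
   [.negSucc 5979, .ofNat 3772, .ofNat 48550, .negSucc 4493, .ofNat 46791, .ofNat 33144, .ofNat 3689, .negSucc 11979, .negSucc 12991, .negSucc 49320, .ofNat 103009, .ofNat 40099, .negSucc 42533,
    .negSucc 59533, .ofNat 76002, .ofNat 108846, .ofNat 29743, .negSucc 80733, .negSucc 47472, .ofNat 22470, .negSucc 15074, .ofNat 23402, .ofNat 85785, .negSucc 62664, .ofNat 50250],
   [.negSucc 223, .ofNat 26870, .negSucc 17606, .negSucc 12324, .negSucc 5219, .ofNat 1777, .negSucc 15219, .ofNat 25528, .ofNat 24966, .negSucc 13217, .ofNat 12939, .negSucc 3886, .negSucc 1672,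
    .ofNat 20192, .negSucc 1755, .negSucc 19130, .negSucc 2770, .ofNat 29424, .ofNat 35945, .ofNat 10526, .negSucc 8539, .ofNat 12794, .negSucc 38770, .negSucc 11404, .negSucc 11276, .ofNat 34066],
   [.negSucc 1414, .negSucc 7440, .ofNat 2607, .ofNat 1827, .negSucc 521, .negSucc 602, .ofNat 1432, .negSucc 9853, .negSucc 4170, .ofNat 8342, .negSucc 2482, .ofNat 2080, .negSucc 1580, .negSucc 1820,
    .ofNat 162, .ofNat 4016, .ofNat 3120, .negSucc 6003, .negSucc 8326, .negSucc 761, .ofNat 8008, .negSucc 5556, .ofNat 12602, .ofNat 6983, .ofNat 4295, .negSucc 5581, .ofNat 6119],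
   [.negSucc 1591, .negSucc 7901, .ofNat 2770, .ofNat 1387, .negSucc 494, .negSucc 130, .ofNat 1072, .negSucc 11321, .negSucc 3299, .ofNat 9364, .negSucc 1603, .ofNat 2997, .negSucc 2773, .negSucc 1285,
    .ofNat 1345, .ofNat 4952, .ofNat 4841, .negSucc 6169, .negSucc 8074, .ofNat 302, .ofNat 9500, .negSucc 6591, .ofNat 14047, .ofNat 8254, .ofNat 5157, .negSucc 5054, .ofNat 8221, .ofNat 691],
   [.negSucc 2297, .ofNat 1499, .negSucc 4819, .ofNat 208, .ofNat 5580, .ofNat 2797, .negSucc 641, .ofNat 2644, .negSucc 1527, .ofNat 4905, .negSucc 3482, .ofNat 1863, .negSucc 415, .ofNat 6135, .negSucc 1518,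
    .ofNat 69, .ofNat 4841, .ofNat 3099, .ofNat 2569, .ofNat 3197, .ofNat 8653, .negSucc 7106, .negSucc 3435, .ofNat 9056, .negSucc 2681, .ofNat 652, .ofNat 9428, .ofNat 4093, .ofNat 4841],
   [.ofNat 722, .negSucc 359, .negSucc 198, .ofNat 1680, .ofNat 1683, .ofNat 150, .ofNat 134, .negSucc 1251, .negSucc 1868, .ofNat 1218, .negSucc 1534, .ofNat 419, .ofNat 962, .negSucc 815, .negSucc 133, .ofNat 1056,
    .ofNat 1366, .ofNat 262, .negSucc 2023, .negSucc 774, .ofNat 1735, .negSucc 2878, .ofNat 2003, .ofNat 2829, .negSucc 550, .negSucc 2047, .ofNat 2509, .ofNat 1475, .ofNat 1366, .ofNat 2161],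
   [.negSucc 284, .negSucc 881, .ofNat 107, .ofNat 1954, .ofNat 2664, .negSucc 172, .ofNat 1085, .negSucc 1553, .negSucc 3443, .ofNat 714, .negSucc 1868, .ofNat 432, .ofNat 1384, .negSucc 2863, .negSucc 1084,
    .ofNat 1290, .negSucc 652, .negSucc 330, .negSucc 1931, .negSucc 1087, .ofNat 197, .negSucc 2134, .ofNat 2367, .ofNat 1472, .negSucc 322, .negSucc 3287, .ofNat 688, .ofNat 1722, .negSucc 652, .ofNat 1565,
    .ofNat 2162],
   [.ofNat 495, .negSucc 20, .ofNat 446, .ofNat 412, .negSucc 332, .negSucc 568, .negSucc 594, .ofNat 63, .ofNat 168, .negSucc 482, .ofNat 693, .negSucc 53, .negSucc 172, .negSucc 166, .ofNat 595, .negSucc 29, .ofNat 16, .ofNat 107,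
    .negSucc 545, .negSucc 388, .negSucc 483, .ofNat 595, .ofNat 426, .negSucc 708, .ofNat 106, .ofNat 411, .negSucc 610, .negSucc 83, .ofNat 16, .ofNat 395, .negSucc 138, .ofNat 525],
   [.ofNat 648, .negSucc 173, .ofNat 752, .ofNat 718, .negSucc 332, .negSucc 874, .negSucc 747, .negSucc 242, .negSucc 137, .negSucc 788, .ofNat 693, .ofNat 99, .negSucc 19, .negSucc 778, .ofNat 748, .negSucc 29, .negSucc 136,
    .ofNat 107, .negSucc 1004, .negSucc 847, .negSucc 789, .ofNat 748, .ofNat 885, .negSucc 1014, .ofNat 106, .ofNat 105, .negSucc 916, .ofNat 69, .negSucc 136, .ofNat 854, .ofNat 14, .ofNat 831, .ofNat 153],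
   [.ofNat 2, .negSucc 2, .ofNat 11, .ofNat 15, .ofNat 9, .negSucc 19, .negSucc 6, .ofNat 4, .negSucc 4, .negSucc 9, .ofNat 28, .ofNat 4, .negSucc 0, .ofNat 0, .ofNat 26, .ofNat 8, .negSucc 3, .negSucc 6, .negSucc 35, .negSucc 11, .negSucc 10, .ofNat 7, .ofNat 30,
    .negSucc 26, .negSucc 7, .ofNat 10, .negSucc 23, .negSucc 6, .negSucc 3, .negSucc 0, .ofNat 14, .ofNat 14, .negSucc 17, .ofNat 19],
   [.negSucc 105, .ofNat 15, .negSucc 70, .negSucc 26, .ofNat 135, .ofNat 24, .ofNat 91, .ofNat 72, .negSucc 14, .ofNat 86, .ofNat 56, .ofNat 8, .negSucc 2, .ofNat 140, .ofNat 30, .ofNat 64, .negSucc 7, .negSucc 56, .negSucc 55, .ofNat 76, .ofNat 71,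
    .negSucc 98, .ofNat 38, .ofNat 11, .negSucc 71, .ofNat 42, .ofNat 12, .negSucc 48, .ofNat 0, .negSucc 162, .ofNat 98, .negSucc 57, .negSucc 153, .ofNat 121, .ofNat 8],
   [.negSucc 109, .ofNat 19, .negSucc 4, .negSucc 15, .ofNat 171, .negSucc 5, .ofNat 0, .negSucc 17, .negSucc 18, .ofNat 24, .ofNat 77, .ofNat 89, .negSucc 21, .ofNat 56, .ofNat 38, .negSucc 15, .negSucc 88, .ofNat 37, .negSucc 76, .negSucc 18, .ofNat 5,
    .negSucc 88, .ofNat 36, .negSucc 70, .negSucc 72, .ofNat 35, .negSucc 2, .ofNat 35, .ofNat 0, .negSucc 72, .ofNat 112, .ofNat 60, .negSucc 97, .ofNat 38, .ofNat 89, .ofNat 91],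
   [.negSucc 357, .ofNat 26, .negSucc 75, .negSucc 359, .ofNat 234, .ofNat 303, .ofNat 0, .negSucc 404, .ofNat 47, .ofNat 102, .negSucc 347, .ofNat 360, .negSucc 56, .negSucc 53, .negSucc 385, .negSucc 432, .negSucc 359, .ofNat 358,
    .ofNat 421, .negSucc 25, .ofNat 76, .negSucc 286, .negSucc 430, .ofNat 118, .ofNat 0, .negSucc 124, .ofNat 334, .ofNat 313, .ofNat 0, .ofNat 0, .ofNat 38, .ofNat 109, .ofNat 277, .negSucc 385, .ofNat 360, .ofNat 405, .ofNat 73],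
   [.negSucc 489, .ofNat 38, .negSucc 115, .negSucc 471, .ofNat 342, .ofNat 393, .ofNat 0, .negSucc 530, .ofNat 57, .ofNat 154, .negSucc 451, .ofNat 488, .negSucc 94, .negSucc 57, .negSucc 509, .negSucc 566, .negSucc 487, .ofNat 490,
    .ofNat 547, .negSucc 37, .ofNat 116, .negSucc 392, .negSucc 568, .ofNat 154, .ofNat 0, .negSucc 154, .ofNat 450, .ofNat 431, .ofNat 16, .negSucc 15, .ofNat 58, .ofNat 155, .ofNat 355, .negSucc 509, .ofNat 488, .ofNat 547, .ofNat 95,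
    .ofNat 16],
   [.negSucc 462, .ofNat 603, .ofNat 520, .negSucc 637, .ofNat 504, .ofNat 464, .negSucc 546, .negSucc 580, .negSucc 462, .negSucc 463, .negSucc 406, .ofNat 604, .ofNat 407, .negSucc 833, .negSucc 693, .negSucc 777,
    .negSucc 603, .ofNat 463, .ofNat 547, .negSucc 602, .negSucc 519, .negSucc 463, .negSucc 636, .negSucc 463, .negSucc 546, .negSucc 832, .ofNat 548, .ofNat 520, .negSucc 580, .ofNat 581, .ofNat 834, .ofNat 833, .ofNat 408,
    .negSucc 693, .ofNat 604, .ofNat 547, .negSucc 406, .negSucc 580, .ofNat 547]]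

/-- Dot product of two lists. -/
def listDot : List ℤ → List ℤ → ℤ
  | [], _ => 0
  | _ :: _, [] => 0
  | a :: as, b :: bs => a * b + listDot as bs

theorem sum_getD_eq_listDot (p : List ℤ) : ∀ (c : List ℤ) (n : ℕ), p.length ≤ n →
    ∑ k ∈ Finset.range n, p.getD k 0 * c.getD k 0 = listDot p c := by
  induction p with
  | nil => intro c n _; simp [listDot]
  | cons a as ih =>
    intro c n hn
    obtain ⟨m, rfl⟩ : ∃ m, n = m + 1 := ⟨n - 1, by simp at hn; omega⟩
    cases c with
    | nil => simp [listDot]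
    | cons b bs =>
      rw [Finset.sum_range_succ']
      simp only [List.getD_cons_succ, List.getD_cons_zero, listDot]
      rw [ih bs m (by simpa using hn), add_comm]

/-- The record matrix. -/
def recM : Matrix (Fin 39) (Fin 39) ℤ :=
  Matrix.of fun i j => (colData.getD j []).getD i 0

/-- The elimination matrix. -/
def elimP : Matrix (Fin 39) (Fin 39) ℤ :=
  Matrix.of fun i j => (elimData.getD i []).getD j 0

theorem recM_entries : ∀ i j, recM i j = 1 ∨ recM i j = -1 := by
  unfold recM
  simp only [Matrix.of_apply]
  decide +kernel

theorem elimData_length : ∀ i : Fin 39, (elimData.getD i []).length = i + 1 := by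
  decide +kernel

theorem elimP_mul_recM (i j : Fin 39) :
    (elimP * recM) i j = listDot (elimData.getD i []) (colData.getD j []) := by
  rw [Matrix.mul_apply, ← sum_getD_eq_listDot _ _ 39 (by rw [elimData_length]; omega),
    Finset.sum_range]
  rfl

theorem elimP_lower (i j : Fin 39) (h : i < j) : elimP i j = 0 := by
  have := elimData_length i
  unfold elimP
  simp only [Matrix.of_apply]
  apply List.getD_eq_default
  rw [this]
  have : i.val < j.val := h
  omega

theorem elim_check : ∀ i j : Fin 39, j < i →
    listDot (elimData.getD i []) (colData.getD j []) = 0 := by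
  decide +kernel

theorem elim_diag_prod :
    (List.ofFn fun i : Fin 39 => listDot (elimData.getD i []) (colData.getD i [])).prod =
      (List.ofFn fun i : Fin 39 => (elimData.getD i []).getD i 0).prod * (2^38 * 9^17 * 1241) := by
  decide +kernel

theorem elim_diag_ne :
    (List.ofFn fun i : Fin 39 => (elimData.getD i []).getD i 0).prod ≠ 0 := by
  decide +kernel

theorem recM_det : recM.det = 2^38 * 9^17 * 1241 := by
  have h1 : elimP.det = (List.ofFn fun i : Fin 39 => (elimData.getD i []).getD i 0).prod := by
    rw [Matrix.det_of_isLowerTriangular elimP (fun i j h => elimP_lower i j h), List.prod_ofFn]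
    rfl
  have h2 : (elimP * recM).det =
      (List.ofFn fun i : Fin 39 => listDot (elimData.getD i []) (colData.getD i [])).prod := by
    rw [Matrix.det_of_isUpperTriangular (fun i j h => by
      rw [elimP_mul_recM]; exact elim_check i j h), List.prod_ofFn]
    exact Finset.prod_congr rfl fun i _ => elimP_mul_recM i i
  rw [Matrix.det_mul, h1, elim_diag_prod] at h2
  exact mul_left_cancel₀ elim_diag_ne h2

theorem stmt_8 :
    (∃ M : Matrix (Fin 39) (Fin 39) ℤ,
      (∀ i j, M i j = 1 ∨ M i j = -1) ∧ M.det = 2^38 * 9^17 * 1241) ∧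
    (2^38 * 9^17 * 1241 : ℤ) ≤ md 39 := by
  refine ⟨⟨recM, recM_entries, recM_det⟩, ?_⟩
  unfold md
  refine le_csSup ?_ ⟨recM, recM_entries, recM_det⟩
  refine ⟨Nat.factorial (Fintype.card (Fin 39)) • (1 : ℤ) ^ Fintype.card (Fin 39), ?_⟩
  rintro d ⟨M, hM, rfl⟩
  refine le_trans (le_abs_self _) ?_
  refine Matrix.det_le (abv := AbsoluteValue.abs) (A := M) (x := 1) fun i j => ?_
  rcases hM i j with h | h <;> simp [h]
end

section
/- There exists a 45×45 matrix with all entries equal to 1 or -1 whose determinant equals 2^44 · 11^21 · 83. Consequently md(45) ≥ 2^44 · 11^21 · 83. -/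
/-- The rows of the matrix, as bit masks (bit `j` is set iff entry `j` is `1`). -/
def rowMask : List ℕ := [
  18790831560575,
  33377062650059,
  18431813726113,
  25919460691161,
  31539385190520,
  23277412761284,
  24337324102590,
  21892374020957,
  22370538346352,
  24176389697434,
  26873201037053,
  31425561408461,
  29288715662930,
  34835465045987,
  31711399075342,
  28742474657239,
  26651809510809,
  21922903603962,
  30092242655664,
  23322468901547,
  28478776120476,
  34876962342668,
  31861078253523,
  32321146604516,
  34040716403249,
  19372110703189,
  31995326211318,
  24498061699032,
  18669532832134,
  32438678351162,
  26987601824703,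
  32933292536183,
  34970005075637,
  29944283201321,
  25067498716527,
  19713579996395,
  30329978739650,
  29131104841326,
  25803625106711,
  25012525611516,
  34401846393503,
  17536616758765,
  13056599418878,
  14770371541851,
  7412970413751]

/-- Entries of the matrix. -/
def witF (i j : ℕ) : ℤ := if (rowMask.getD i 0).testBit j then 1 else -1

def wit : Matrix (Fin 45) (Fin 45) ℤ := Matrix.of fun i j => witF i.val j.val

/-- The row group an index belongs to; the groups have sizes 31, 10, 4. -/
def grpIdx (i : ℕ) : ℕ := if i < 31 then 0 else if i < 41 then 1 else 2

def grpF (i k : ℕ) : ℤ := if grpIdx i = k then 1 else 0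

def grp : Matrix (Fin 45) (Fin 3) ℤ := Matrix.of fun i k => grpF i.val k.val

/-- Off-diagonal Gram entries between the three groups. -/
def cplF (a b : ℕ) : ℤ := if a + b = 3 ∧ a ≠ 0 ∧ b ≠ 0 then 5 else 1

def cpl : Matrix (Fin 3) (Fin 3) ℤ := Matrix.of fun a b => cplF a.val b.val

/-- Number of ones among the `n` lowest bits. -/
def popc : ℕ → ℕ → ℕ
  | 0, _ => 0
  | n + 1, x => x % 2 + popc n (x / 2)

lemma sum_popc (n : ℕ) : ∀ x y : ℕ,
    (∑ k ∈ Finset.range n, (if x.testBit k then (1 : ℤ) else -1) *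
      (if y.testBit k then (1 : ℤ) else -1)) = n - 2 * (popc n (x ^^^ y) : ℤ) := by
  induction n with
  | zero => intro x y; simp [popc]
  | succ n ih =>
    intro x y
    rw [Finset.sum_range_succ']
    simp only [Nat.testBit_succ]
    rw [ih (x / 2) (y / 2), popc, ← Nat.xor_div_two]
    have hx : (x ^^^ y) % 2 = (x % 2 + y % 2) % 2 := by
      have := Nat.xor_mod_two_eq (m := x) (n := y)
      omega
    rw [hx]
    simp only [Nat.testBit_zero]
    rcases Nat.mod_two_eq_zero_or_one x with h | h <;>
      rcases Nat.mod_two_eq_zero_or_one y with h' | h' <;> simp [h, h'] <;> ring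

lemma pop_check : ∀ i : Fin 45, ∀ j : Fin 45,
    popc 45 (Nat.xor (rowMask.getD i.val 0) (rowMask.getD j.val 0)) =
      if i.val = j.val then 0 else
        if grpIdx i.val + grpIdx j.val = 3 then 20 else 22 := by
  decide +kernel

lemma wit_gram_apply (i j : Fin 45) : (∑ k : Fin 45, witF i.val k.val * witF j.val k.val) =
    (if i = j then 44 else 0) +
      ∑ b : Fin 3, (∑ a : Fin 3, grpF i.val a.val * cplF a.val b.val) * grpF j.val b.val := by
  rw [Fin.sum_univ_eq_sum_range (fun k => witF i.val k * witF j.val k) 45]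
  unfold witF
  have hp := pop_check i j
  change popc 45 (rowMask.getD i.val 0 ^^^ rowMask.getD j.val 0) = _ at hp
  rw [sum_popc, hp]
  simp only [Fin.sum_univ_three]
  have hlt : ∀ m, grpIdx m = 0 ∨ grpIdx m = 1 ∨ grpIdx m = 2 := by
    intro m
    unfold grpIdx
    split_ifs <;> simp
  by_cases hij : i = j
  · subst hij
    rcases hlt i.val with h | h | h <;> simp [grpF, cplF, h]
  · have hv : i.val ≠ j.val := fun h => hij (Fin.ext h)
    rcases hlt i.val with h | h | h <;> rcases hlt j.val with h' | h' | h' <;>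
      simp [grpF, cplF, h, h', hij, hv]

lemma grp_mul : ∀ i j : Fin 3,
    (∑ k : Fin 45, grpF k.val i.val * (∑ a : Fin 3, grpF k.val a.val * cplF a.val j.val)) =
      (if i.val = 0 then 31 else if i.val = 1 then 10 else 4) * cplF i.val j.val := by
  decide +kernel

lemma wit_gram : wit * wit.transpose = (44 : ℤ) • 1 + grp * cpl * grp.transpose := by
  ext i j
  have h := wit_gram_apply i j
  simp only [Matrix.mul_apply, Matrix.add_apply, Matrix.smul_apply, Matrix.one_apply,
    Matrix.transpose_apply, wit, grp, cpl, Matrix.of_apply, h]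
  split_ifs <;> simp

lemma det_sq : wit.det ^ 2 = ((2 ^ 44 * 11 ^ 21 * 83 : ℤ)) ^ 2 := by
  have h1 : wit.det ^ 2 = (wit * wit.transpose).det := by
    rw [Matrix.det_mul, Matrix.det_transpose, sq]
  have hK : grp.transpose * (grp * cpl) = !![31, 31, 31; 10, 10, 50; 4, 20, 4] := by
    ext i j
    have h := grp_mul i j
    simp only [Matrix.mul_apply, Matrix.transpose_apply, grp, cpl, Matrix.of_apply, h]
    fin_cases i <;> fin_cases j <;> simp [cplF]
  have key : ((wit * wit.transpose).det : ℚ) = ((2 ^ 44 * 11 ^ 21 * 83 : ℚ)) ^ 2 := by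
    let f := Int.castRingHom ℚ
    have e : (wit * wit.transpose).map f =
        (44 : ℚ) • (1 + ((1 / 44 : ℚ) • (grp * cpl).map f) * grp.transpose.map f) := by
      rw [wit_gram, smul_add, Matrix.smul_mul, smul_smul, ← Matrix.map_mul]
      ext i j
      rw [Matrix.map_apply, Matrix.add_apply, Matrix.add_apply, Matrix.smul_apply,
        Matrix.smul_apply, Matrix.smul_apply, Matrix.map_apply, Matrix.one_apply, Matrix.one_apply]
      split_ifs <;> simp [f]
    have hd : ((wit * wit.transpose).det : ℚ) = ((wit * wit.transpose).map f).det := by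
      have := RingHom.map_det f (wit * wit.transpose)
      simpa [f] using this
    rw [hd, e, Matrix.det_smul, Matrix.det_one_add_mul_comm, Matrix.mul_smul,
      ← Matrix.map_mul, hK, Matrix.det_fin_three]
    simp [f]
    norm_num
  rw [h1]
  exact_mod_cast key

lemma wit_pm : ∀ i j, wit i j = 1 ∨ wit i j = -1 := by
  intro i j
  simp only [wit, Matrix.of_apply, witF]
  split_ifs <;> simp

lemma exists_wit : ∃ M : Matrix (Fin 45) (Fin 45) ℤ,
    (∀ i j, M i j = 1 ∨ M i j = -1) ∧ M.det = 2 ^ 44 * 11 ^ 21 * 83 := by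
  rcases sq_eq_sq_iff_eq_or_eq_neg.mp det_sq with h | h
  · exact ⟨wit, wit_pm, h⟩
  · refine ⟨-wit, fun i j => ?_, ?_⟩
    · rcases wit_pm i j with h | h <;> simp [h]
    · rw [Matrix.det_neg, h, Fintype.card_fin]
      norm_num

lemma bdd (n : ℕ) : BddAbove {d : ℤ | ∃ M : Matrix (Fin n) (Fin n) ℤ,
    (∀ i j, M i j = 1 ∨ M i j = -1) ∧ M.det = d} := by
  refine ⟨(Nat.factorial (Fintype.card (Fin n))) • (1 : ℤ) ^ (Fintype.card (Fin n)), ?_⟩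
  rintro d ⟨M, hM, rfl⟩
  refine (le_abs_self _).trans ?_
  refine Matrix.det_le (abv := AbsoluteValue.abs) (x := 1) (fun i j => ?_)
  rcases hM i j with h | h <;> simp [h]

theorem stmt_9 :
    (∃ M : Matrix (Fin 45) (Fin 45) ℤ,
      (∀ i j, M i j = 1 ∨ M i j = -1) ∧ M.det = 2^44 * 11^21 * 83) ∧
    (2^44 * 11^21 * 83 : ℤ) ≤ md 45 :=
  ⟨exists_wit, le_csSup (bdd 45) exists_wit⟩
end
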